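/- arXiv:2212.10350 — 2 statements merged into one kernel-verified Lean document; each statement's English description precedes it below -/
import Mathlib

section
/- Let Γ be a symmetric d×d real matrix with zero diagonal that is strictly conditionally negative definite and satisfies the metric property Γ_{ij} ≤ Γ_{ik} + Γ_{jk} for all i, j, k ∈ {1, …, d}. Fix k ∈ {1, …, d}, let Σ^{(k)} be the Farris transform of Γ at k (which is positive definite), and let W = (W_i)_{i ≠ k} be a multivariate Gaussian random vector with covariance matrix Σ^{(k)} and mean vector (−Σ^{(k)}_{ii}/2)_{i ≠ k}. Let E be a standard exponential random variable independent of W. Then the d-dimensional random vector Y defined by Y_k = E and Y_i = E + W_i for i ≠ k is positively associated. -/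
open MeasureTheory Matrix

/-- A random vector `X` (with coordinates indexed by `ι`) is positively associated if
`Cov(f(X), g(X)) ≥ 0` for all bounded measurable coordinatewise-nondecreasing
functions `f, g`. -/
def PositivelyAssociated {Ω ι : Type*} [MeasurableSpace Ω]
    (μ : Measure Ω) (X : Ω → (ι → ℝ)) : Prop :=
  ∀ f g : (ι → ℝ) → ℝ, Measurable f → Measurable g →
    (∃ C, ∀ x, |f x| ≤ C) → (∃ C, ∀ x, |g x| ≤ C) →
    Monotone f → Monotone g →
    0 ≤ (∫ ω, f (X ω) * g (X ω) ∂μ) - (∫ ω, f (X ω) ∂μ) * (∫ ω, g (X ω) ∂μ)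

/-- The Farris transform `Σ^{(k)}` of `Γ` at `k`,
`Σ^{(k)}_{ij} = (Γ_{ik} + Γ_{jk} − Γ_{ij})/2` for `i, j ≠ k`. -/
noncomputable def farris {d : ℕ} (Γ : Matrix (Fin d) (Fin d) ℝ) (k : Fin d) :
    Matrix {i : Fin d // i ≠ k} {i : Fin d // i ≠ k} ℝ :=
  Matrix.of fun i j => (Γ (i : Fin d) k + Γ (j : Fin d) k - Γ (i : Fin d) (j : Fin d)) / 2

/-- The density of a multivariate Gaussian with mean `m` and (positive definite)
covariance matrix `S`. -/
noncomputable def gaussDensity {n : Type*} [Fintype n] [DecidableEq n]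
    (m : n → ℝ) (S : Matrix n n ℝ) (x : n → ℝ) : ℝ :=
  (Real.sqrt ((2 * Real.pi) ^ (Fintype.card n) * S.det))⁻¹ *
    Real.exp (-(1 / 2) * ((x - m) ⬝ᵥ S⁻¹.mulVec (x - m)))

/-!
Positive association passes to products of independent vectors and to monotone images, every law
on a linear order is associated (Chebyshev), and `Y` is a nondecreasing function of `(E, W)`. So it
suffices that the Gaussian vector `W`, whose covariances are nonnegative by the metric property, is
associated (Pitt's theorem).

For Pitt's theorem, let `Z`, `Z'` be independent copies of the centered vector and consider
`Φ θ = 𝔼[f(Z) g(cos θ • Z + sin θ • Z')]`, which runs from `𝔼[f g]` at `θ = 0` to `𝔼[f] 𝔼[g]` at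
`θ = π / 2`; the point is that `Φ` is decreasing. Its derivative pairs `∇g(U)` with `V`, where
`U = cos θ • Z + sin θ • Z'` and `V = -sin θ • Z + cos θ • Z'` have the same joint law as `Z`, `Z'`.
Given `U`, the function `f(Z) = f(cos θ • U - sin θ • V)` is decreasing in `V` and `∇g(U) ≥ 0`, so
`Φ' ≤ 0` reduces to `𝔼[F(V) Vᵢ] ≥ 0` for nondecreasing `F`. This follows from Chebyshev's inequality
in `Vᵢ` alone, since `V = R + Vᵢ • a` with `R` independent of `Vᵢ` and `a ≥ 0` the regression
coefficients. A merely bounded `g` is mollified first; the mollifications converge almost everywhere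
because the law of `W` has a density.
-/

open ProbabilityTheory

/-- Bounded measurable nondecreasing functions: the test functions of positive association. -/
structure IsBoundedMonotone {α : Type*} [MeasurableSpace α] [Preorder α] (f : α → ℝ) : Prop where
  measurable : Measurable f
  bounded : ∃ C, ∀ x, |f x| ≤ C
  monotone : Monotone f

/-- Positive association of a law `ν`: the covariance under `ν` of any two bounded measurable
nondecreasing functions is nonnegative. -/
def IsAssociated {α : Type*} [MeasurableSpace α] [Preorder α] (ν : Measure α) : Prop :=
  ∀ ⦃f g : α → ℝ⦄, IsBoundedMonotone f → IsBoundedMonotone g →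
    (∫ x, f x ∂ν) * ∫ x, g x ∂ν ≤ ∫ x, f x * g x ∂ν

section Association

variable {α β : Type*} [MeasurableSpace α] [MeasurableSpace β]

theorem integral_mul_integral_le_of_monovary {ν : Measure α} [IsProbabilityMeasure ν]
    {f g : α → ℝ} (hfg : Monovary f g) (hf : Integrable f ν) (hg : Integrable g ν)
    (hmul : Integrable (fun x ↦ f x * g x) ν) :
    (∫ x, f x ∂ν) * ∫ x, g x ∂ν ≤ ∫ x, f x * g x ∂ν := by
  have hnonneg : 0 ≤ ∫ p, (f p.2 - f p.1) * (g p.2 - g p.1) ∂ν.prod ν :=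
    integral_nonneg fun p ↦ monovary_iff_forall_mul_nonneg.1 hfg p.1 p.2
  have hexpand : ∫ p, (f p.2 - f p.1) * (g p.2 - g p.1) ∂ν.prod ν =
      2 * (∫ x, f x * g x ∂ν - (∫ x, f x ∂ν) * ∫ x, g x ∂ν) := by
    calc ∫ p, (f p.2 - f p.1) * (g p.2 - g p.1) ∂ν.prod ν
        = ∫ p, (f p.1 * g p.1 + f p.2 * g p.2) - (f p.1 * g p.2 + g p.1 * f p.2) ∂ν.prod ν := by
          congr with p; ring
      _ = (∫ p, f p.1 * g p.1 ∂ν.prod ν + ∫ p, f p.2 * g p.2 ∂ν.prod ν) -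
          (∫ p, f p.1 * g p.2 ∂ν.prod ν + ∫ p, g p.1 * f p.2 ∂ν.prod ν) := by
          rw [integral_sub ((hmul.comp_fst ν).fun_add (hmul.comp_snd ν))
            ((hf.mul_prod hg).fun_add (hg.mul_prod hf)),
            integral_add (hmul.comp_fst ν) (hmul.comp_snd ν),
            integral_add (hf.mul_prod hg) (hg.mul_prod hf)]
      _ = 2 * (∫ x, f x * g x ∂ν - (∫ x, f x ∂ν) * ∫ x, g x ∂ν) := by
          rw [integral_fun_fst (f := fun x ↦ f x * g x), integral_fun_snd (f := fun x ↦ f x * g x),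
            integral_prod_mul, integral_prod_mul, probReal_univ, one_smul]
          ring
  linarith

namespace IsBoundedMonotone

variable [Preorder α] [Preorder β] {f g : α → ℝ}

theorem integrable (hf : IsBoundedMonotone f) (ν : Measure α) [IsFiniteMeasure ν] :
    Integrable f ν :=
  let ⟨C, hC⟩ := hf.bounded
  .of_bound hf.measurable.aestronglyMeasurable C (.of_forall hC)

theorem integrable_mul {h : α → ℝ} (hf : IsBoundedMonotone f) {ν : Measure α}
    (hh : Integrable h ν) : Integrable (fun x ↦ f x * h x) ν :=
  let ⟨_, hC⟩ := hf.bounded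
  hh.bdd_mul hf.measurable.aestronglyMeasurable (.of_forall hC)

theorem comp (hf : IsBoundedMonotone f) {φ : β → α} (hφ : Measurable φ) (hφ' : Monotone φ) :
    IsBoundedMonotone (f ∘ φ) :=
  ⟨hf.measurable.comp hφ, hf.bounded.imp fun _ hC x ↦ hC (φ x), hf.monotone.comp hφ'⟩

theorem integral_prod_right {F : α × β → ℝ} (hF : IsBoundedMonotone F) (ν : Measure β)
    [IsFiniteMeasure ν] : IsBoundedMonotone fun x ↦ ∫ y, F (x, y) ∂ν := by
  have hint (x : α) : Integrable (fun y ↦ F (x, y)) ν :=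
    (hF.comp measurable_prodMk_left fun _ _ h ↦ ⟨le_rfl, h⟩).integrable ν
  obtain ⟨C, hC⟩ := hF.bounded
  exact ⟨hF.measurable.stronglyMeasurable.integral_prod_right'.measurable,
    ⟨C * ν.real Set.univ, fun x ↦ norm_integral_le_of_norm_le_const (f := fun y ↦ F (x, y))
      (.of_forall fun y ↦ hC (x, y))⟩,
    fun x x' h ↦ integral_mono (hint x) (hint x') fun y ↦ hF.monotone ⟨h, le_rfl⟩⟩

end IsBoundedMonotone

namespace IsAssociated

theorem of_linearOrder [LinearOrder α] (ν : Measure α) [IsProbabilityMeasure ν] :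
    IsAssociated ν := fun _ _ hf hg ↦
  integral_mul_integral_le_of_monovary (hf.monotone.monovary hg.monotone) (hf.integrable ν)
    (hg.integrable ν) (hf.integrable_mul (hg.integrable ν))

variable [Preorder α] [Preorder β]

theorem map {ν : Measure α} (hν : IsAssociated ν) {φ : α → β} (hφ : Measurable φ)
    (hφ' : Monotone φ) : IsAssociated (ν.map φ) := by
  intro f g hf hg
  rw [integral_map hφ.aemeasurable hf.measurable.aestronglyMeasurable,
    integral_map hφ.aemeasurable hg.measurable.aestronglyMeasurable,
    integral_map hφ.aemeasurable (hf.measurable.fun_mul hg.measurable).aestronglyMeasurable]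
  exact hν (hf.comp hφ hφ') (hg.comp hφ hφ')

theorem prod {μ : Measure α} {ν : Measure β} [IsFiniteMeasure μ] [IsFiniteMeasure ν]
    (hμ : IsAssociated μ) (hν : IsAssociated ν) : IsAssociated (μ.prod ν) := by
  intro f g hf hg
  have isBoundedMonotone_section {F : α × β → ℝ} (hF : IsBoundedMonotone F) (x : α) :
      IsBoundedMonotone fun y ↦ F (x, y) :=
    hF.comp measurable_prodMk_left fun _ _ h ↦ ⟨le_rfl, h⟩
  have hfg : Integrable (fun p ↦ f p * g p) (μ.prod ν) := hf.integrable_mul (hg.integrable _)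
  have hF := hf.integral_prod_right ν
  have hG := hg.integral_prod_right ν
  calc (∫ p, f p ∂μ.prod ν) * ∫ p, g p ∂μ.prod ν
      = (∫ x, ∫ y, f (x, y) ∂ν ∂μ) * ∫ x, ∫ y, g (x, y) ∂ν ∂μ := by
        rw [integral_prod _ (hf.integrable _), integral_prod _ (hg.integrable _)]
    _ ≤ ∫ x, (∫ y, f (x, y) ∂ν) * ∫ y, g (x, y) ∂ν ∂μ := hμ hF hG
    _ ≤ ∫ x, ∫ y, f (x, y) * g (x, y) ∂ν ∂μ :=
        integral_mono (hF.integrable_mul (hG.integrable μ)) hfg.integral_prod_left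
          fun x ↦ hν (isBoundedMonotone_section hf x) (isBoundedMonotone_section hg x)
    _ = ∫ p, f p * g p ∂μ.prod ν := (integral_prod _ hfg).symm

theorem positivelyAssociated {Ω ι : Type*} [MeasurableSpace Ω] {μ : Measure Ω} {X : Ω → ι → ℝ}
    (hX : AEMeasurable X μ) (h : IsAssociated (μ.map X)) : PositivelyAssociated μ X := by
  intro f g hf hg hfb hgb hfm hgm
  have := h ⟨hf, hfb, hfm⟩ ⟨hg, hgb, hgm⟩
  rw [integral_map hX hf.aestronglyMeasurable, integral_map hX hg.aestronglyMeasurable,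
    integral_map hX (hf.fun_mul hg).aestronglyMeasurable] at this
  exact sub_nonneg.2 this

end IsAssociated

end Association

section GaussianCorrelation

variable {ι : Type*} {F : (ι → ℝ) → ℝ}

theorem integral_add_smul_mul_nonneg_of_indepFun {Ω : Type*} [MeasurableSpace Ω] {P : Measure Ω}
    [IsProbabilityMeasure P] {R : Ω → ι → ℝ} {X : Ω → ℝ} (hRX : IndepFun R X P)
    (hR : AEMeasurable R P) (hX : Integrable X P) (hX₀ : ∫ ω, X ω ∂P = 0) {a : ι → ℝ} (ha : 0 ≤ a)
    (hF : IsBoundedMonotone F) : 0 ≤ ∫ ω, F (R ω + X ω • a) * X ω ∂P := by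
  have := Measure.isProbabilityMeasure_map hR
  have := Measure.isProbabilityMeasure_map hX.aemeasurable
  have hid : Integrable id (P.map X) :=
    (integrable_map_measure aestronglyMeasurable_id hX.aemeasurable).2 hX
  have hid₀ : ∫ u, id u ∂P.map X = 0 := by
    rwa [integral_map hX.aemeasurable aestronglyMeasurable_id]
  have hG : Measurable fun p : (ι → ℝ) × ℝ ↦ F (p.1 + p.2 • a) * p.2 :=
    (hF.measurable.comp (by fun_prop)).mul measurable_snd
  have hGint : Integrable (fun p : (ι → ℝ) × ℝ ↦ F (p.1 + p.2 • a) * p.2)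
      ((P.map R).prod (P.map X)) :=
    let ⟨_, hC⟩ := hF.bounded
    (hid.comp_snd _).bdd_mul (hF.measurable.comp (by fun_prop)).aestronglyMeasurable
      (.of_forall fun p ↦ hC (p.1 + p.2 • a))
  have hsection (r : ι → ℝ) : 0 ≤ ∫ u, F (r + u • a) * u ∂P.map X := by
    have hFr : IsBoundedMonotone fun u : ℝ ↦ F (r + u • a) :=
      hF.comp (by fun_prop) fun u v huv ↦ add_le_add_right (smul_le_smul_of_nonneg_right huv ha) r
    have := integral_mul_integral_le_of_monovary (hFr.monotone.monovary monotone_id)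
      (hFr.integrable _) hid (hFr.integrable_mul hid)
    rwa [hid₀, mul_zero] at this
  calc 0 ≤ ∫ r, ∫ u, F (r + u • a) * u ∂P.map X ∂P.map R := integral_nonneg hsection
    _ = ∫ p, F (p.1 + p.2 • a) * p.2 ∂P.map fun ω ↦ (R ω, X ω) := by
      rw [(indepFun_iff_map_prod_eq_prod_map_map hR hX.aemeasurable).1 hRX, integral_prod _ hGint]
    _ = ∫ ω, F (R ω + X ω • a) * X ω ∂P :=
      integral_map (hR.prodMk hX.aemeasurable) hG.aestronglyMeasurable

variable {μ : Measure (ι → ℝ)}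

theorem memLp_two_eval_of_isGaussian [IsGaussian μ] (i : ι) :
    MemLp (fun w ↦ w i) 2 μ :=
  (IsGaussian.hasGaussianLaw_id (μ := μ)).eval i |>.memLp_two

theorem indepFun_sub_smul_eval_of_isGaussian [Finite ι] [IsGaussian μ] {i : ι} {a : ι → ℝ}
    (ha : ∀ j, cov[fun w ↦ w j, fun w ↦ w i; μ] = a j * Var[fun w ↦ w i; μ]) :
    IndepFun (fun w ↦ w - w i • a) (fun w ↦ w i) μ := by
  have := Fintype.ofFinite ι
  -- The independence criterion concerns pairs of vectors, so `w i` is viewed as one over `Unit`.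
  let coord : (ι → ℝ) →L[ℝ] ℝ := .proj i
  let residualAndCoord : (ι → ℝ) →L[ℝ] (ι → ℝ) × (Unit → ℝ) :=
    (.id ℝ (ι → ℝ) - coord.smulRight a).prod (.pi fun _ ↦ coord)
  have hlaw : HasGaussianLaw (fun w : ι → ℝ ↦ (w - w i • a, fun _ : Unit ↦ w i)) μ :=
    IsGaussian.hasGaussianLaw_id.map residualAndCoord
  have huncorrelated (j : ι) : cov[fun w : ι → ℝ ↦ w j - w i * a j, fun w ↦ w i; μ] = 0 := by
    rw [covariance_fun_sub_left (memLp_two_eval_of_isGaussian j)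
      ((memLp_two_eval_of_isGaussian i).mul_const (a j)) (memLp_two_eval_of_isGaussian i),
      covariance_mul_const_left, covariance_self (measurable_pi_apply i).aemeasurable, ha]
    ring
  exact (hlaw.indepFun_of_covariance_eval (X := fun j (w : ι → ℝ) ↦ w j - w i * a j)
    (Y := fun _ w ↦ w i) fun j _ ↦ huncorrelated j).comp measurable_id (measurable_pi_apply ())

theorem integral_mul_eval_nonneg_of_isGaussian [Finite ι] [IsGaussian μ] {i : ι}
    (hi : ∫ w, w i ∂μ = 0) (hcov : ∀ j, 0 ≤ cov[fun w ↦ w j, fun w ↦ w i; μ])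
    (hF : IsBoundedMonotone F) : 0 ≤ ∫ w, F w * w i ∂μ := by
  by_cases hvar : Var[fun w ↦ w i; μ] = 0
  · have hzero := ae_eq_integral_of_variance_eq_zero (memLp_two_eval_of_isGaussian i) hvar
    exact (integral_eq_zero_of_ae (hzero.mono fun w hw ↦ by simp [hw, hi])).ge
  · let a : ι → ℝ := fun j ↦ cov[fun w ↦ w j, fun w ↦ w i; μ] / Var[fun w ↦ w i; μ]
    have hindep : IndepFun (fun w ↦ w - w i • a) (fun w ↦ w i) μ :=
      indepFun_sub_smul_eval_of_isGaussian fun j ↦ (div_mul_cancel₀ _ hvar).symm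
    simpa using integral_add_smul_mul_nonneg_of_indepFun hindep (by fun_prop)
      ((memLp_two_eval_of_isGaussian i).integrable one_le_two) hi
      (a := a) (fun j ↦ div_nonneg (hcov j) (variance_nonneg _ _)) hF

theorem integral_mul_nonneg_of_isGaussian [Fintype ι] [IsGaussian μ] (hμ : μ[id] = 0)
    (hcov : ∀ i j, 0 ≤ cov[fun w ↦ w i, fun w ↦ w j; μ]) (hF : IsBoundedMonotone F)
    {L : (ι → ℝ) →ₗ[ℝ] ℝ} (hL : ∀ v, 0 ≤ v → 0 ≤ L v) : 0 ≤ ∫ w, F w * L w ∂μ := by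
  classical
  have hμ_eval (i : ι) : ∫ w, w i ∂μ = 0 := by
    rw [← eval_integral fun i ↦ (memLp_two_eval_of_isGaussian i).integrable one_le_two]
    simpa using congrFun hμ i
  have hexpand (w : ι → ℝ) : F w * L w = ∑ i, L (Pi.single i 1) * (F w * w i) := by
    have hLw : L w = ∑ i, w i * L (Pi.single i 1) := by
      conv_lhs => rw [← Finset.univ_sum_single w, map_sum]
      exact Finset.sum_congr rfl fun i _ ↦ by
        rw [← smul_eq_mul, ← map_smul, ← Pi.single_smul, smul_eq_mul, mul_one]
    rw [hLw, Finset.mul_sum]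
    exact Finset.sum_congr rfl fun i _ ↦ by ring
  simp_rw [hexpand]
  rw [integral_finsetSum _ fun i _ ↦ (hF.integrable_mul
    ((memLp_two_eval_of_isGaussian i).integrable one_le_two)).const_mul _]
  refine Finset.sum_nonneg fun i _ ↦ ?_
  rw [integral_const_mul]
  exact mul_nonneg (hL _ (Pi.single_nonneg.2 zero_le_one))
    (integral_mul_eval_nonneg_of_isGaussian (hμ_eval i) (fun j ↦ hcov j i) hF)

end GaussianCorrelation

section Rotation

theorem fderiv_nonneg_of_monotone {E : Type*} [NormedAddCommGroup E] [NormedSpace ℝ E]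
    [PartialOrder E] [IsOrderedAddMonoid E] [IsOrderedModule ℝ E] {g : E → ℝ} (hg : Monotone g)
    (hg' : Differentiable ℝ g) (x : E) {v : E} (hv : 0 ≤ v) : 0 ≤ fderiv ℝ g x v := by
  have hline : Monotone fun t : ℝ ↦ g (x + t • v) := fun s t hst ↦
    hg (add_le_add_right (smul_le_smul_of_nonneg_right hst hv) x)
  have hderiv : HasDerivAt (fun t : ℝ ↦ g (x + t • v)) (fderiv ℝ g x v) 0 :=
    (hg' x).hasFDerivAt.hasLineDerivAt v
  exact hderiv.deriv ▸ hline.deriv_nonneg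

variable {E : Type*} [NormedAddCommGroup E] [NormedSpace ℝ E]

theorem hasDerivAt_comp_rotation {g : E → ℝ} (hg : Differentiable ℝ g) (θ : ℝ) (p : E × E) :
    HasDerivAt (fun θ ↦ g (ContinuousLinearMap.rotation θ p).1)
      (fderiv ℝ g (ContinuousLinearMap.rotation θ p).1 (ContinuousLinearMap.rotation θ p).2) θ := by
  simp only [ContinuousLinearMap.rotation_apply]
  exact (hg _).hasFDerivAt.comp_hasDerivAt θ
    (((Real.hasDerivAt_cos θ).smul_const p.1).add ((Real.hasDerivAt_sin θ).smul_const p.2))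

theorem rotation_rotation_neg (θ : ℝ) (p : E × E) :
    ContinuousLinearMap.rotation θ (ContinuousLinearMap.rotation (-θ) p) = p := by
  have hsq := Real.cos_sq_add_sin_sq θ
  ext <;> simp only [ContinuousLinearMap.rotation_apply, Real.cos_neg, Real.sin_neg] <;>
    match_scalars <;> linarith

theorem norm_fderiv_rotation_le {g : E → ℝ} {K : ℝ} (hgK : ∀ x, ‖fderiv ℝ g x‖ ≤ K) (θ : ℝ)
    (p : E × E) :
    ‖fderiv ℝ g (ContinuousLinearMap.rotation θ p).1 (ContinuousLinearMap.rotation θ p).2‖ ≤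
      K * (‖p.1‖ + ‖p.2‖) := by
  have hK : 0 ≤ K := (norm_nonneg _).trans (hgK 0)
  have hrot : ‖(ContinuousLinearMap.rotation θ p).2‖ ≤ ‖p.1‖ + ‖p.2‖ := by
    rw [ContinuousLinearMap.rotation_apply]
    refine (norm_add_le _ _).trans (add_le_add ?_ ?_)
    all_goals
      rw [norm_smul]
      refine mul_le_of_le_one_left (norm_nonneg _) ?_
      simp [Real.abs_sin_le_one, Real.abs_cos_le_one]
  exact (ContinuousLinearMap.le_of_opNorm_le _ (hgK _) _).trans
    (mul_le_mul_of_nonneg_left hrot hK)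

variable [SecondCountableTopology E] [MeasurableSpace E] [BorelSpace E]
  {μ : Measure E} {f g : E → ℝ} {K : ℝ}

theorem hasDerivAt_integral_mul_comp_rotation [IsFiniteMeasure μ] (hμ : Integrable id μ)
    (hf : Measurable f) {A B : ℝ} (hfA : ∀ x, ‖f x‖ ≤ A) (hg : ContDiff ℝ 1 g)
    (hgB : ∀ x, ‖g x‖ ≤ B) (hgK : ∀ x, ‖fderiv ℝ g x‖ ≤ K) (θ : ℝ) :
    HasDerivAt (fun θ ↦ ∫ p, f p.1 * g (ContinuousLinearMap.rotation θ p).1 ∂μ.prod μ)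
      (∫ p, f p.1 * fderiv ℝ g (ContinuousLinearMap.rotation θ p).1
        (ContinuousLinearMap.rotation θ p).2 ∂μ.prod μ) θ := by
  have hf₁ : AEStronglyMeasurable (fun p : E × E ↦ f p.1) (μ.prod μ) :=
    (hf.comp measurable_fst).aestronglyMeasurable
  have hg₁ (θ : ℝ) : AEStronglyMeasurable
      (fun p : E × E ↦ g (ContinuousLinearMap.rotation θ p).1) (μ.prod μ) :=
    (hg.continuous.comp (by fun_prop)).aestronglyMeasurable
  have hg₂ : AEStronglyMeasurable (fun p : E × E ↦ fderiv ℝ g (ContinuousLinearMap.rotation θ p).1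
      (ContinuousLinearMap.rotation θ p).2) (μ.prod μ) :=
    (((hg.continuous_fderiv one_ne_zero).comp (by fun_prop)).clm_apply
      (by fun_prop)).aestronglyMeasurable
  have hint : Integrable (fun p : E × E ↦ f p.1 * g (ContinuousLinearMap.rotation θ p).1)
      (μ.prod μ) :=
    (Integrable.of_bound (hg₁ θ) B (.of_forall fun p ↦ hgB _)).bdd_mul hf₁
      (.of_forall fun p ↦ hfA p.1)
  have hbound : Integrable (fun p : E × E ↦ A * (K * (‖p.1‖ + ‖p.2‖))) (μ.prod μ) :=
    (((hμ.norm.comp_fst μ).add (hμ.norm.comp_snd μ)).const_mul K).const_mul A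
  exact (hasDerivAt_integral_of_dominated_loc_of_deriv_le Filter.univ_mem
    (.of_forall fun θ ↦ hf₁.mul (hg₁ θ)) hint (hf₁.mul hg₂)
    (.of_forall fun p θ _ ↦ (norm_mul_le _ _).trans <| mul_le_mul (hfA p.1)
      (norm_fderiv_rotation_le hgK θ p) (norm_nonneg _) ((norm_nonneg _).trans (hfA p.1)))
    hbound (.of_forall fun p θ _ ↦
      (hasDerivAt_comp_rotation (hg.differentiable one_ne_zero) θ p).const_mul (f p.1))).2

end Rotation

section SmoothAssociation

variable {ι : Type*} [Fintype ι] {μ : Measure (ι → ℝ)} [IsGaussian μ] {f g : (ι → ℝ) → ℝ} {K : ℝ}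

theorem integral_mul_fderiv_rotation_nonpos (hμ : μ[id] = 0)
    (hcov : ∀ i j, 0 ≤ cov[fun w ↦ w i, fun w ↦ w j; μ]) (hf : IsBoundedMonotone f)
    (hg : Monotone g) (hg₁ : ContDiff ℝ 1 g) (hgK : ∀ x, ‖fderiv ℝ g x‖ ≤ K) {θ : ℝ}
    (hθ : 0 ≤ Real.sin θ) :
    ∫ p, f p.1 * fderiv ℝ g (ContinuousLinearMap.rotation θ p).1
      (ContinuousLinearMap.rotation θ p).2 ∂μ.prod μ ≤ 0 := by
  have hmeas : Measurable fun p : (ι → ℝ) × (ι → ℝ) ↦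
      f p.1 * fderiv ℝ g (ContinuousLinearMap.rotation θ p).1
        (ContinuousLinearMap.rotation θ p).2 :=
    (hf.measurable.comp measurable_fst).mul <| Continuous.measurable <|
      ((hg₁.continuous_fderiv one_ne_zero).comp (by fun_prop)).clm_apply (by fun_prop)
  have hint : Integrable (fun q : (ι → ℝ) × (ι → ℝ) ↦
      f (ContinuousLinearMap.rotation (-θ) q).1 * fderiv ℝ g q.1 q.2) (μ.prod μ) := by
    obtain ⟨C, hC⟩ := hf.bounded
    have hgint : Integrable (fun q : (ι → ℝ) × (ι → ℝ) ↦ fderiv ℝ g q.1 q.2) (μ.prod μ) :=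
      ((IsGaussian.integrable_id.norm.comp_snd μ).const_mul K).mono'
        (((hg₁.continuous_fderiv one_ne_zero).comp continuous_fst).clm_apply
          continuous_snd).aestronglyMeasurable
        (.of_forall fun q ↦ ContinuousLinearMap.le_of_opNorm_le _ (hgK q.1) q.2)
    exact hgint.bdd_mul (hf.measurable.comp (by fun_prop)).aestronglyMeasurable
      (.of_forall fun q ↦ hC _)
  have hsection (z : ι → ℝ) :
      ∫ w, f (ContinuousLinearMap.rotation (-θ) (z, w)).1 * fderiv ℝ g z w ∂μ ≤ 0 := by
    have hF : IsBoundedMonotone fun w ↦ -f (ContinuousLinearMap.rotation (-θ) (z, w)).1 := by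
      obtain ⟨C, hC⟩ := hf.bounded
      refine ⟨(hf.measurable.comp (by fun_prop)).neg, ⟨C, fun w ↦ by rw [abs_neg]; exact hC _⟩,
        fun w w' h ↦ neg_le_neg (hf.monotone ?_)⟩
      simp only [ContinuousLinearMap.rotation_apply, Real.sin_neg, neg_smul]
      gcongr
    have := integral_mul_nonneg_of_isGaussian hμ hcov hF (L := (fderiv ℝ g z : (ι → ℝ) →ₗ[ℝ] ℝ))
      fun v hv ↦ fderiv_nonneg_of_monotone hg (hg₁.differentiable one_ne_zero) z hv
    simpa [integral_neg] using this
  calc ∫ p, f p.1 * fderiv ℝ g (ContinuousLinearMap.rotation θ p).1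
        (ContinuousLinearMap.rotation θ p).2 ∂μ.prod μ
      = ∫ q, f (ContinuousLinearMap.rotation (-θ) q).1 * fderiv ℝ g q.1 q.2 ∂μ.prod μ := by
        conv_lhs => rw [← IsGaussian.map_rotation_eq_self hμ (-θ)]
        rw [integral_map (by fun_prop) hmeas.aestronglyMeasurable]
        simp only [rotation_rotation_neg]
    _ = ∫ z, ∫ w, f (ContinuousLinearMap.rotation (-θ) (z, w)).1 * fderiv ℝ g z w ∂μ ∂μ :=
        integral_prod _ hint
    _ ≤ 0 := integral_nonpos hsection

theorem integral_mul_integral_le_of_contDiff (hμ : μ[id] = 0)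
    (hcov : ∀ i j, 0 ≤ cov[fun w ↦ w i, fun w ↦ w j; μ]) (hf : IsBoundedMonotone f)
    (hg : IsBoundedMonotone g) (hg₁ : ContDiff ℝ 1 g) (hgK : ∀ x, ‖fderiv ℝ g x‖ ≤ K) :
    (∫ x, f x ∂μ) * ∫ x, g x ∂μ ≤ ∫ x, f x * g x ∂μ := by
  obtain ⟨A, hA⟩ := hf.bounded
  obtain ⟨B, hB⟩ := hg.bounded
  let Φ : ℝ → ℝ := fun θ ↦ ∫ p, f p.1 * g (ContinuousLinearMap.rotation θ p).1 ∂μ.prod μ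
  have hΦ (θ : ℝ) := hasDerivAt_integral_mul_comp_rotation (μ := μ) IsGaussian.integrable_id
    hf.measurable hA hg₁ hB hgK θ
  have hanti : AntitoneOn Φ (Set.Icc 0 (Real.pi / 2)) := by
    refine antitoneOn_of_deriv_nonpos (convex_Icc _ _)
      (fun θ _ ↦ (hΦ θ).continuousAt.continuousWithinAt)
      (fun θ _ ↦ (hΦ θ).differentiableAt.differentiableWithinAt) fun θ hθ ↦ ?_
    rw [interior_Icc] at hθ
    exact (hΦ θ).deriv.trans_le (integral_mul_fderiv_rotation_nonpos hμ hcov hf hg.monotone hg₁ hgK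
      (Real.sin_nonneg_of_nonneg_of_le_pi hθ.1.le (by linarith [hθ.2, Real.pi_pos])))
  have hstart : Φ 0 = ∫ x, f x * g x ∂μ := by
    simp [Φ, ContinuousLinearMap.rotation_apply, integral_fun_fst (f := fun x ↦ f x * g x)]
  have hend : Φ (Real.pi / 2) = (∫ x, f x ∂μ) * ∫ x, g x ∂μ := by
    simp [Φ, ContinuousLinearMap.rotation_apply, integral_prod_mul]
  have hpi : 0 ≤ Real.pi / 2 := by positivity
  exact hend ▸ hstart ▸ hanti (Set.left_mem_Icc.2 hpi) (Set.right_mem_Icc.2 hpi) hpi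

end SmoothAssociation

section Mollification

open ContinuousLinearMap
open scoped Convolution

theorem norm_convolution_le {𝕜 G E E' F : Type*} [NontriviallyNormedField 𝕜]
    [NormedAddCommGroup E] [NormedSpace 𝕜 E] [NormedAddCommGroup E'] [NormedSpace 𝕜 E']
    [NormedAddCommGroup F] [NormedSpace 𝕜 F] [NormedSpace ℝ F] [AddGroup G] [MeasurableSpace G]
    {ν : Measure G} (L : E →L[𝕜] E' →L[𝕜] F) {f : G → E} (hf : Integrable f ν) {g : G → E'} {C : ℝ}
    (hg : ∀ x, ‖g x‖ ≤ C) (x : G) : ‖(f ⋆[L, ν] g) x‖ ≤ ‖L‖ * (∫ t, ‖f t‖ ∂ν) * C := by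
  have hpointwise (t : G) : ‖L (f t) (g (x - t))‖ ≤ ‖L‖ * ‖f t‖ * C :=
    (L.le_opNorm₂ _ _).trans (mul_le_mul_of_nonneg_left (hg _) (by positivity))
  calc ‖(f ⋆[L, ν] g) x‖ ≤ ∫ t, ‖L‖ * ‖f t‖ * C ∂ν :=
        norm_integral_le_of_norm_le ((hf.norm.const_mul _).mul_const _) (.of_forall hpointwise)
    _ = ‖L‖ * (∫ t, ‖f t‖ ∂ν) * C := by rw [integral_mul_const, integral_const_mul]

theorem IsBoundedMonotone.locallyIntegrable {α : Type*} [TopologicalSpace α] [MeasurableSpace α]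
    [Preorder α] {ν : Measure α} [IsLocallyFiniteMeasure ν] {g : α → ℝ}
    (hg : IsBoundedMonotone g) : LocallyIntegrable g ν :=
  let ⟨C, hC⟩ := hg.bounded
  (locallyIntegrable_const C).mono hg.measurable.aestronglyMeasurable
    (.of_forall fun x ↦ (hC x).trans (le_abs_self C))

variable {E : Type*} [NormedAddCommGroup E] [NormedSpace ℝ E] [FiniteDimensional ℝ E]
  [MeasurableSpace E] [BorelSpace E] {ν : Measure E} [ν.IsAddHaarMeasure]

theorem norm_normed_convolution_le (φ : ContDiffBump (0 : E)) {g : E → ℝ} {C : ℝ}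
    (hg : ∀ x, ‖g x‖ ≤ C) (x : E) : ‖(φ.normed ν ⋆[lsmul ℝ ℝ, ν] g) x‖ ≤ C := by
  have hmass : ∫ t, ‖φ.normed ν t‖ ∂ν = 1 := by
    simp_rw [Real.norm_of_nonneg (φ.nonneg_normed _)]
    exact φ.integral_normed
  simpa only [hmass, opNorm_lsmul, one_mul] using
    norm_convolution_le (lsmul ℝ ℝ : ℝ →L[ℝ] ℝ →L[ℝ] ℝ) (φ.integrable_normed (μ := ν)) hg x

theorem exists_norm_fderiv_normed_convolution_le (φ : ContDiffBump (0 : E)) {g : E → ℝ} {C : ℝ}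
    (hg : ∀ x, ‖g x‖ ≤ C) (hg' : LocallyIntegrable g ν) :
    ∃ K, ∀ x, ‖fderiv ℝ (φ.normed ν ⋆[lsmul ℝ ℝ, ν] g) x‖ ≤ K := by
  have hφ : ContDiff ℝ 1 (φ.normed ν) := φ.contDiff_normed
  have hφ' : Integrable (fderiv ℝ (φ.normed ν)) ν :=
    (hφ.continuous_fderiv one_ne_zero).integrable_of_hasCompactSupport
      (φ.hasCompactSupport_normed.fderiv ℝ)
  exact ⟨_, fun x ↦
    (congrArg norm (φ.hasCompactSupport_normed.hasFDerivAt_convolution_left _ hφ hg' x).fderiv)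
      |>.trans_le (norm_convolution_le _ hφ' hg x)⟩

theorem IsBoundedMonotone.normed_convolution [PartialOrder E] [IsOrderedAddMonoid E] {g : E → ℝ}
    (hg : IsBoundedMonotone g) (φ : ContDiffBump (0 : E)) :
    IsBoundedMonotone (φ.normed ν ⋆[lsmul ℝ ℝ, ν] g) := by
  obtain ⟨C, hC⟩ := hg.bounded
  have hexists : ConvolutionExists (φ.normed ν) g (lsmul ℝ ℝ) ν :=
    φ.hasCompactSupport_normed.convolutionExists_left _ φ.continuous_normed hg.locallyIntegrable
  refine ⟨Continuous.measurable ?_, ⟨C, norm_normed_convolution_le φ hC⟩, fun x y hxy ↦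
    integral_mono (hexists x) (hexists y) fun t ↦ ?_⟩
  · exact φ.hasCompactSupport_normed.continuous_convolution_left _ φ.continuous_normed
      hg.locallyIntegrable
  · exact mul_le_mul_of_nonneg_left (hg.monotone (sub_le_sub_right hxy t)) (φ.nonneg_normed t)

theorem exists_seq_contDiff_tendsto_ae [PartialOrder E] [IsOrderedAddMonoid E] {g : E → ℝ}
    (hg : IsBoundedMonotone g) {C : ℝ} (hC : ∀ x, ‖g x‖ ≤ C) :
    ∃ G : ℕ → E → ℝ, (∀ n, IsBoundedMonotone (G n)) ∧ (∀ n, ContDiff ℝ 1 (G n)) ∧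
      (∀ n, ∃ K, ∀ x, ‖fderiv ℝ (G n) x‖ ≤ K) ∧ (∀ n x, ‖G n x‖ ≤ C) ∧
      ∀ᵐ x ∂ν, Filter.Tendsto (fun n ↦ G n x) Filter.atTop (nhds (g x)) := by
  let φ (n : ℕ) : ContDiffBump (0 : E) :=
    ⟨1 / ((n : ℝ) + 1), 2 * (1 / ((n : ℝ) + 1)), by positivity, lt_two_mul_self (by positivity)⟩
  have hφ : Filter.Tendsto (fun n ↦ (φ n).rOut) Filter.atTop (nhds 0) := by
    simpa only [mul_zero] using tendsto_one_div_add_atTop_nhds_zero_nat.const_mul (2 : ℝ)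
  exact ⟨fun n ↦ (φ n).normed ν ⋆[lsmul ℝ ℝ, ν] g, fun n ↦ hg.normed_convolution (φ n),
    fun n ↦ (φ n).hasCompactSupport_normed.contDiff_convolution_left _ (φ n).contDiff_normed
      hg.locallyIntegrable,
    fun n ↦ exists_norm_fderiv_normed_convolution_le (φ n) hC hg.locallyIntegrable,
    fun n ↦ norm_normed_convolution_le (φ n) hC,
    ContDiffBump.ae_convolution_tendsto_right_of_locallyIntegrable hφ (.of_forall fun _ ↦ le_rfl)
      hg.locallyIntegrable⟩

end Mollification

section Pitt

variable {ι : Type*} [Fintype ι] {μ : Measure (ι → ℝ)} [IsGaussian μ]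

theorem isAssociated_of_isGaussian_of_integral_eq_zero (hμ : μ[id] = 0) (hac : μ ≪ volume)
    (hcov : ∀ i j, 0 ≤ cov[fun w ↦ w i, fun w ↦ w j; μ]) : IsAssociated μ := by
  intro f g hf hg
  obtain ⟨A, hA⟩ := hf.bounded
  obtain ⟨C, hC⟩ := hg.bounded
  obtain ⟨G, hG, hG₁, hGK, hGC, hlim⟩ := exists_seq_contDiff_tendsto_ae (ν := volume) hg hC
  have hineq (n : ℕ) : (∫ x, f x ∂μ) * ∫ x, G n x ∂μ ≤ ∫ x, f x * G n x ∂μ :=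
    let ⟨_, hK⟩ := hGK n
    integral_mul_integral_le_of_contDiff hμ hcov hf (hG n) (hG₁ n) hK
  have hlim_integral : Filter.Tendsto (fun n ↦ ∫ x, G n x ∂μ) Filter.atTop (nhds (∫ x, g x ∂μ)) :=
    tendsto_integral_of_dominated_convergence (fun _ ↦ C)
      (fun n ↦ (hG n).measurable.aestronglyMeasurable) (integrable_const C)
      (fun n ↦ .of_forall (hGC n)) (hac.ae_le hlim)
  have hlim_mul : Filter.Tendsto (fun n ↦ ∫ x, f x * G n x ∂μ) Filter.atTop
      (nhds (∫ x, f x * g x ∂μ)) :=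
    tendsto_integral_of_dominated_convergence (fun _ ↦ A * C)
      (fun n ↦ (hf.measurable.fun_mul (hG n).measurable).aestronglyMeasurable)
      (integrable_const _)
      (fun n ↦ .of_forall fun x ↦ norm_mul_le_of_le (hA x) (hGC n x))
      (Filter.Eventually.mono (hac.ae_le hlim) fun x hx ↦ hx.const_mul (f x))
  exact le_of_tendsto_of_tendsto' (hlim_integral.const_mul _) hlim_mul hineq

theorem isAssociated_of_isGaussian (hac : μ ≪ volume)
    (hcov : ∀ i j, 0 ≤ cov[fun w ↦ w i, fun w ↦ w j; μ]) : IsAssociated μ := by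
  let m : ι → ℝ := μ[id]
  have hint (i : ι) := (memLp_two_eval_of_isGaussian (μ := μ) i).integrable one_le_two
  have hcov_map (i j : ι) : cov[fun w ↦ w i, fun w ↦ w j; μ.map (· + -m)] =
      cov[fun w ↦ w i, fun w ↦ w j; μ] := by
    rw [covariance_map_fun (measurable_pi_apply i).aestronglyMeasurable
      (measurable_pi_apply j).aestronglyMeasurable (by fun_prop)]
    simp only [Pi.add_apply]
    rw [covariance_add_const_left (hint i), covariance_add_const_right (hint j)]
  have hcentered : IsAssociated (μ.map (· + -m)) := by
    refine isAssociated_of_isGaussian_of_integral_eq_zero ?_ ?_ fun i j ↦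
      (hcov i j).trans_eq (hcov_map i j).symm
    · rw [integral_map (by fun_prop) aestronglyMeasurable_id]
      simp only [id_eq]
      rw [integral_add IsGaussian.integrable_fun_id (integrable_const _)]
      simp [m]
    · exact map_add_right_eq_self volume (-m) ▸ hac.map (measurable_add_const (-m))
  have hshift := hcentered.map (φ := (· + m)) (by fun_prop) add_left_mono
  rw [Measure.map_map (by fun_prop) (by fun_prop)] at hshift
  simpa [Function.comp_def] using hshift

end Pitt

section GaussianDensity

theorem pi_withDensity_ofReal {ι : Type*} [Fintype ι] {α : ι → Type*}
    [∀ i, MeasurableSpace (α i)] {ν : ∀ i, Measure (α i)} [∀ i, SigmaFinite (ν i)]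
    {f : ∀ i, α i → ℝ} (hf : ∀ i, Integrable (f i) (ν i)) (hf₀ : ∀ i x, 0 ≤ f i x) :
    Measure.pi (fun i ↦ (ν i).withDensity fun x ↦ ENNReal.ofReal (f i x)) =
      (Measure.pi ν).withDensity fun x ↦ ENNReal.ofReal (∏ i, f i (x i)) := by
  have (i : ι) := isFiniteMeasure_withDensity_ofReal (hf i).2
  refine Measure.pi_eq fun s hs ↦ ?_
  rw [withDensity_apply _ (.univ_pi hs), Measure.restrict_pi_pi,
    ← ofReal_integral_eq_lintegral_ofReal (Integrable.fintype_prod_dep fun i ↦ (hf i).restrict)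
      (.of_forall fun x ↦ Finset.prod_nonneg fun i _ ↦ hf₀ i (x i)),
    integral_fintype_prod_eq_prod,
    ENNReal.ofReal_prod_of_nonneg fun i _ ↦ integral_nonneg (hf₀ i)]
  refine Finset.prod_congr rfl fun i _ ↦ ?_
  rw [withDensity_apply _ (hs i),
    ofReal_integral_eq_lintegral_ofReal (hf i).restrict (.of_forall (hf₀ i))]

theorem map_withDensity_comp {α β : Type*} [MeasurableSpace α] [MeasurableSpace β]
    {ν : Measure α} {g : β → ENNReal} (hg : Measurable g) {e : α → β} (he : Measurable e) :
    (ν.withDensity fun x ↦ g (e x)).map e = (ν.map e).withDensity g := by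
  ext s hs
  rw [Measure.map_apply he hs, withDensity_apply _ (he hs), withDensity_apply _ hs,
    setLIntegral_map hs hg he]

variable {ι : Type*} [Fintype ι] [DecidableEq ι]

theorem continuous_gaussDensity (m : ι → ℝ) (S : Matrix ι ι ℝ) :
    Continuous (gaussDensity m S) := by
  unfold gaussDensity
  fun_prop

theorem gaussDensity_zero_one (x : ι → ℝ) :
    gaussDensity 0 1 x = ∏ i, gaussianPDFReal 0 1 (x i) := by
  have hsqrt : √((2 * Real.pi) ^ Fintype.card ι) = √(2 * Real.pi) ^ Fintype.card ι :=
    (Real.sqrt_eq_iff_mul_self_eq (by positivity) (by positivity)).2 (by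
      rw [← mul_pow, Real.mul_self_sqrt (by positivity)])
  have hexponent : -(1 / 2) * (x ⬝ᵥ x) = ∑ i, -(x i) ^ 2 / 2 := by
    rw [dotProduct, Finset.mul_sum]
    exact Finset.sum_congr rfl fun i _ ↦ by ring
  simp only [gaussDensity, gaussianPDFReal_def, det_one, mul_one, sub_zero, inv_one, one_mulVec,
    NNReal.coe_one, Finset.prod_mul_distrib, Finset.prod_const, Finset.card_univ, hsqrt,
    hexponent, Real.exp_sum, inv_pow]

theorem gaussDensity_zero_one_eq_abs_det_mul (m : ι → ℝ) {A : Matrix ι ι ℝ} (hA : A.det ≠ 0)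
    (x : ι → ℝ) : gaussDensity 0 1 x = |A.det| * gaussDensity m (A * Aᵀ) (m + A *ᵥ x) := by
  have hunit : IsUnit A.det := hA.isUnit
  have hquad : (A *ᵥ x) ⬝ᵥ (A * Aᵀ)⁻¹ *ᵥ (A *ᵥ x) = x ⬝ᵥ x := by
    rw [Matrix.mul_inv_rev, mulVec_mulVec, Matrix.mul_assoc, nonsing_inv_mul _ hunit,
      Matrix.mul_one, dotProduct_mulVec, ← mulVec_transpose, mulVec_mulVec, transpose_nonsing_inv,
      transpose_transpose, nonsing_inv_mul _ hunit, one_mulVec]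
  have hsqrt : √((2 * Real.pi) ^ Fintype.card ι * (A * Aᵀ).det) =
      √((2 * Real.pi) ^ Fintype.card ι) * |A.det| := by
    rw [Real.sqrt_mul (by positivity), det_mul, det_transpose, Real.sqrt_mul_self_eq_abs]
  have hdet : |A.det| ≠ 0 := abs_ne_zero.2 hA
  simp only [gaussDensity, add_sub_cancel_left, hquad, hsqrt, det_one, mul_one, sub_zero, inv_one,
    one_mulVec]
  field_simp

theorem map_affine_volume (m : ι → ℝ) {A : Matrix ι ι ℝ} (hA : A.det ≠ 0) :
    (volume : Measure (ι → ℝ)).map (fun x ↦ m + A *ᵥ x) = ENNReal.ofReal |A.det⁻¹| • volume := by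
  have hlin : Measure.map (A *ᵥ ·) volume = ENNReal.ofReal |A.det⁻¹| • volume :=
    Real.map_matrix_volume_pi_eq_smul_volume_pi hA
  calc volume.map (fun x ↦ m + A *ᵥ x) = (volume.map (A *ᵥ ·)).map (m + ·) :=
        (Measure.map_map (by fun_prop) (by fun_prop)).symm
    _ = ENNReal.ofReal |A.det⁻¹| • volume := by
        rw [hlin, Measure.map_smul, map_add_left_eq_self]

theorem map_affine_withDensity_gaussDensity (m : ι → ℝ) {A : Matrix ι ι ℝ} (hA : A.det ≠ 0) :
    (volume.withDensity fun x ↦ ENNReal.ofReal (gaussDensity 0 1 x)).map (fun x ↦ m + A *ᵥ x) =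
      volume.withDensity fun x ↦ ENNReal.ofReal (gaussDensity m (A * Aᵀ) x) := by
  have hmeas := (continuous_gaussDensity m (A * Aᵀ)).measurable.ennreal_ofReal
  simp_rw [gaussDensity_zero_one_eq_abs_det_mul m hA, ENNReal.ofReal_mul (abs_nonneg A.det)]
  rw [map_withDensity_comp (e := fun x ↦ m + A *ᵥ x)
      (g := fun y ↦ ENNReal.ofReal |A.det| * ENNReal.ofReal (gaussDensity m (A * Aᵀ) y))
      (hmeas.const_mul _) (by fun_prop), map_affine_volume m hA,
    withDensity_smul_measure]
  change _ • volume.withDensity (ENNReal.ofReal |A.det| • _) = _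
  rw [withDensity_smul _ hmeas, smul_smul, ← ENNReal.ofReal_mul (abs_nonneg _), ← abs_mul,
    inv_mul_cancel₀ hA, abs_one, ENNReal.ofReal_one, one_smul]

theorem pi_gaussianReal_eq_withDensity :
    Measure.pi (fun _ : ι ↦ gaussianReal 0 1) =
      volume.withDensity fun x ↦ ENNReal.ofReal (gaussDensity 0 1 x) := by
  simp_rw [gaussDensity_zero_one, gaussianReal_of_var_ne_zero 0 one_ne_zero, gaussianPDF_def]
  exact pi_withDensity_ofReal (fun _ ↦ integrable_gaussianPDFReal 0 1)
    fun _ ↦ gaussianPDFReal_nonneg 0 1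

open scoped MatrixOrder in
theorem map_ofLp_multivariateGaussian (m : ι → ℝ) {S : Matrix ι ι ℝ} (hS : S.PosDef) :
    (multivariateGaussian (WithLp.toLp 2 m) S).map WithLp.ofLp =
      volume.withDensity fun x ↦ ENNReal.ofReal (gaussDensity m S x) := by
  set A := CFC.sqrt S
  have hA : A * A = S := CFC.sqrt_mul_sqrt_self S hS.posSemidef.nonneg
  have hAt : Aᵀ = A := by
    simpa only [star_eq_conjTranspose, conjTranspose_eq_transpose_of_trivial] using
      (CFC.sqrt_nonneg S).isSelfAdjoint.star_eq
  have hdet : A.det ≠ 0 := fun h ↦ hS.det_pos.ne' (by rw [← hA, det_mul, h, zero_mul])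
  have hS_eq : S = A * Aᵀ := by rw [hAt, hA]
  conv_rhs => rw [hS_eq, ← map_affine_withDensity_gaussDensity m hdet]
  rw [← pi_gaussianReal_eq_withDensity,
    multivariateGaussian, ← map_pi_eq_stdGaussian, Measure.map_map (by fun_prop) (by fun_prop),
    Measure.map_map (by fun_prop) (by fun_prop)]
  rfl

theorem isAssociated_withDensity_gaussDensity (m : ι → ℝ) {S : Matrix ι ι ℝ} (hS : S.PosDef)
    (hS₀ : ∀ i j, 0 ≤ S i j) :
    IsAssociated (volume.withDensity fun x ↦ ENNReal.ofReal (gaussDensity m S x)) := by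
  have hmap := map_ofLp_multivariateGaussian m hS
  have hgauss : IsGaussian (volume.withDensity fun x ↦ ENNReal.ofReal (gaussDensity m S x)) :=
    hmap ▸ isGaussian_map_equiv (EuclideanSpace.equiv ι ℝ)
  refine isAssociated_of_isGaussian (withDensity_absolutelyContinuous _ _) fun i j ↦ ?_
  rw [← hmap, covariance_map_fun (measurable_pi_apply i).aestronglyMeasurable
      (measurable_pi_apply j).aestronglyMeasurable (by fun_prop),
    covariance_eval_multivariateGaussian hS.posSemidef]
  exact hS₀ i j

end GaussianDensity

section Farris

/-- The matrix with columns `e_j - e_k` for `j ≠ k`, which form a basis of the vectors whose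
coordinates sum to zero. In this basis the bilinear form of a symmetric `Γ` with `Γ k k = 0` is `-2`
times the Farris transform of `Γ` at `k`. -/
def contrast {ι : Type*} [DecidableEq ι] (k : ι) : Matrix ι {i // i ≠ k} ℝ :=
  Matrix.of fun i j ↦ (Pi.single (j : ι) 1 - Pi.single k 1 : ι → ℝ) i

theorem contrast_mulVec_apply {ι : Type*} [Fintype ι] [DecidableEq ι] {k : ι}
    (z : {i // i ≠ k} → ℝ) (j : {i // i ≠ k}) : (contrast k *ᵥ z) j = z j := by
  simp [contrast, mulVec, dotProduct, Pi.single_apply, j.2, Subtype.coe_inj]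

theorem sum_contrast_mulVec {ι : Type*} [Fintype ι] [DecidableEq ι] {k : ι}
    (z : {i // i ≠ k} → ℝ) : ∑ i, (contrast k *ᵥ z) i = 0 := by
  simp only [mulVec, dotProduct]
  rw [Finset.sum_comm]
  simp [contrast, ← Finset.sum_mul]

variable {d : ℕ} {Γ : Matrix (Fin d) (Fin d) ℝ} {k : Fin d}

theorem farris_eq_contrast (hsym : Γ.IsSymm) (hk : Γ k k = 0) :
    farris Γ k = (-(1 / 2) : ℝ) • ((contrast k)ᵀ * Γ * contrast k) := by
  ext i j
  have hentry : ((contrast k)ᵀ * Γ * contrast k) i j =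
      (Pi.single (i : Fin d) 1 - Pi.single k 1) ⬝ᵥ
        Γ *ᵥ (Pi.single (j : Fin d) 1 - Pi.single k 1) := by
    rw [Matrix.mul_assoc]
    rfl
  simp only [Matrix.smul_apply, hentry, farris, of_apply, mulVec_sub, mulVec_single_one,
    sub_dotProduct, dotProduct_sub, single_one_dotProduct, col_apply, hk,
    hsym.apply (j : Fin d) k, smul_eq_mul]
  ring

theorem farris_posDef (hsym : Γ.IsSymm) (hk : Γ k k = 0)
    (hscnd : ∀ x : Fin d → ℝ, x ≠ 0 → ∑ i, x i = 0 → x ⬝ᵥ Γ *ᵥ x < 0) : (farris Γ k).PosDef := by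
  refine .of_dotProduct_mulVec_pos ?_ fun z hz ↦ ?_
  · ext i j
    simp only [farris, conjTranspose_apply, of_apply, star_trivial, hsym.apply (i : Fin d) j,
      add_comm]
  · have hz' : contrast k *ᵥ z ≠ 0 := fun h ↦
      hz (funext fun j ↦ by rw [← contrast_mulVec_apply z j, h]; rfl)
    have hneg := hscnd _ hz' (sum_contrast_mulVec z)
    have hquad : z ⬝ᵥ farris Γ k *ᵥ z =
        -(1 / 2) * ((contrast k *ᵥ z) ⬝ᵥ Γ *ᵥ (contrast k *ᵥ z)) := by
      rw [farris_eq_contrast hsym hk, smul_mulVec, dotProduct_smul, smul_eq_mul, ← mulVec_mulVec,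
        ← mulVec_mulVec, dotProduct_mulVec, vecMul_transpose]
    rw [star_trivial, hquad]
    linarith

theorem farris_nonneg (hmetric : ∀ i j, Γ i j ≤ Γ i k + Γ j k) (i j : {i // i ≠ k}) :
    0 ≤ farris Γ k i j :=
  div_nonneg (sub_nonneg.2 (hmetric i j)) zero_le_two

end Farris

section CommonShift

variable {ι : Type*} [DecidableEq ι] (k : ι)

/-- The map sending `(e, w)` to the vector with `k`-th coordinate `e` and `i`-th coordinate
`e + w i` for `i ≠ k`, so that `Y = commonShift k (E, W)`. -/
def commonShift (p : ℝ × ({i // i ≠ k} → ℝ)) (i : ι) : ℝ :=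
  if h : i = k then p.1 else p.1 + p.2 ⟨i, h⟩

theorem measurable_commonShift : Measurable (commonShift k) := by
  refine measurable_pi_lambda _ fun i ↦ ?_
  by_cases h : i = k <;> simp only [commonShift, h, dite_true, dite_false] <;> fun_prop

theorem monotone_commonShift : Monotone (commonShift k) := by
  intro p q hpq i
  by_cases h : i = k
  · simpa only [commonShift, h, dite_true] using hpq.1
  · simpa only [commonShift, h, dite_false] using add_le_add hpq.1 (hpq.2 ⟨i, h⟩)

end CommonShift

theorem HuslerReiss_metric_associated_general {Ω : Type*} [MeasurableSpace Ω] {μ : Measure Ω}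
    [IsProbabilityMeasure μ] {d : ℕ} {k : Fin d} {Γ : Matrix (Fin d) (Fin d) ℝ}
    (hsym : Γ.IsSymm) (hk : Γ k k = 0)
    (hscnd : ∀ x : Fin d → ℝ, x ≠ 0 → ∑ i, x i = 0 → x ⬝ᵥ Γ *ᵥ x < 0)
    (hmetric : ∀ i j, Γ i j ≤ Γ i k + Γ j k)
    {W : Ω → ({i : Fin d // i ≠ k} → ℝ)} (hW : AEMeasurable W μ) {m : {i : Fin d // i ≠ k} → ℝ}
    (hWlaw : μ.map W = volume.withDensity
      fun x ↦ ENNReal.ofReal (gaussDensity m (farris Γ k) x))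
    {E : Ω → ℝ} (hE : AEMeasurable E μ) (hindep : IndepFun E W μ) :
    PositivelyAssociated μ fun ω ↦ commonShift k (E ω, W ω) := by
  have := Measure.isProbabilityMeasure_map hW
  have := Measure.isProbabilityMeasure_map hE
  have hWassoc : IsAssociated (μ.map W) :=
    hWlaw ▸ isAssociated_withDensity_gaussDensity m (farris_posDef hsym hk hscnd)
      (farris_nonneg hmetric)
  have hprod : IsAssociated (μ.map fun ω ↦ (E ω, W ω)) :=
    (indepFun_iff_map_prod_eq_prod_map_map hE hW).1 hindep ▸
      (IsAssociated.of_linearOrder (μ.map E)).prod hWassoc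
  have hY := hprod.map (measurable_commonShift k) (monotone_commonShift k)
  rw [AEMeasurable.map_map_of_aemeasurable (measurable_commonShift k).aemeasurable
    (hE.prodMk hW)] at hY
  exact hY.positivelyAssociated
    ((measurable_commonShift k).comp_aemeasurable (hE.prodMk hW))

/-- If `Γ` is strictly conditionally negative definite with zero diagonal and satisfies
the metric property, `W` is Gaussian with covariance `Σ^{(k)}` (the Farris transform of
`Γ` at `k`) and mean `(−Σ^{(k)}_{ii}/2)_{i≠k}`, and `E` is standard exponential
independent of `W`, then `Y` with `Y_k = E`, `Y_i = E + W_i` (`i ≠ k`) is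
positively associated. -/
theorem HuslerReiss_metric_associated
    {Ω : Type*} [MeasurableSpace Ω] (μ : Measure Ω) [IsProbabilityMeasure μ]
    {d : ℕ} (k : Fin d) (Γ : Matrix (Fin d) (Fin d) ℝ)
    (hsym : Γ.IsSymm) (hdiag : ∀ i, Γ i i = 0)
    (hscnd : ∀ x : Fin d → ℝ, x ≠ 0 → (∑ i, x i) = 0 → x ⬝ᵥ Γ.mulVec x < 0)
    (hmetric : ∀ i j l : Fin d, Γ i j ≤ Γ i l + Γ j l)
    (W : Ω → ({i : Fin d // i ≠ k} → ℝ)) (hWmeas : Measurable W)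
    (hWdist : Measure.map W μ = volume.withDensity
      (fun x => ENNReal.ofReal
        (gaussDensity (fun i => -(farris Γ k i i) / 2) (farris Γ k) x)))
    (E : Ω → ℝ) (hEmeas : Measurable E)
    (hEexp : Measure.map E μ = ProbabilityTheory.expMeasure 1)
    (hIndep : ProbabilityTheory.IndepFun E W μ)
    (Y : Ω → Fin d → ℝ)
    (hY : ∀ ω i, Y ω i = if h : i = k then E ω else E ω + W ω ⟨i, h⟩) :
    PositivelyAssociated μ Y := by
  obtain rfl : Y = fun ω ↦ commonShift k (E ω, W ω) := funext fun ω ↦ funext (hY ω)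
  exact HuslerReiss_metric_associated_general hsym (hdiag k) hscnd (fun i j ↦ hmetric i j k)
    hWmeas.aemeasurable hWdist hEmeas.aemeasurable hIndep
end

section
/- Let Q ∈ 𝒬 and let i < j be indices in {1, …, d}. Then the partial derivative of the logarithm of the spanning tree polynomial with respect to the weight Q_{ij} equals the corresponding variogram entry: writing Q(t) for the matrix obtained from Q by replacing Q_{ij} and Q_{ji} by Q_{ij} + t, the function t ↦ log τ(Q(t)) is differentiable at t = 0 with derivative Γ(Q)_{ij}. -/
open Matrix Finset

/-- `Θ(Q)`: `Θ(Q)_{ij} = −Q_{ij}` for `i ≠ j` and `Θ(Q)_{ii} = ∑_{j≠i} Q_{ij}`. -/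
noncomputable def thetaOf {d : ℕ} (Q : Matrix (Fin d) (Fin d) ℝ) :
    Matrix (Fin d) (Fin d) ℝ :=
  Matrix.of fun i j => if i = j then ∑ l ∈ univ.filter (fun l => l ≠ i), Q i l else -Q i j

/-- Membership in `𝒬`: symmetric, zero diagonal, and `xᵀΘ(Q)x > 0` for every nonzero
`x` with `∑ᵢ xᵢ = 0`. -/
def memQ {d : ℕ} (Q : Matrix (Fin d) (Fin d) ℝ) : Prop :=
  Q.IsSymm ∧ (∀ i, Q i i = 0) ∧
    ∀ x : Fin d → ℝ, x ≠ 0 → (∑ i, x i) = 0 → 0 < x ⬝ᵥ (thetaOf Q).mulVec x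

/-- The centering matrix `P = I − (1/d)𝟙𝟙ᵀ`. -/
noncomputable def Pmat (d : ℕ) : Matrix (Fin d) (Fin d) ℝ :=
  1 - ((d : ℝ)⁻¹) • Matrix.of (fun _ _ : Fin d => (1 : ℝ))

/-- `S` is the matrix `Σ(Q)`: the unique symmetric matrix with `Σ(Q)𝟙 = 0` and
`Θ(Q)Σ(Q) = P`. -/
def isSigmaOf {d : ℕ} (Q S : Matrix (Fin d) (Fin d) ℝ) : Prop :=
  S.IsSymm ∧ S.mulVec (fun _ => 1) = 0 ∧ thetaOf Q * S = Pmat d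

/-- The variogram associated with `Σ`: `Γ_{ij} = Σ_{ii} + Σ_{jj} − 2Σ_{ij}`. -/
noncomputable def gammaOf {d : ℕ} (S : Matrix (Fin d) (Fin d) ℝ) :
    Matrix (Fin d) (Fin d) ℝ :=
  Matrix.of fun i j => S i i + S j j - 2 * S i j

/-- The inner product `⟨A, B⟩ = ∑_{i<j} A_{ij} B_{ij}` on symmetric matrices with
zero diagonal. -/
noncomputable def sinner {d : ℕ} (A B : Matrix (Fin d) (Fin d) ℝ) : ℝ :=
  ∑ p ∈ univ.filter (fun p : Fin d × Fin d => p.1 < p.2), A p.1 p.2 * B p.1 p.2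

open Classical in
/-- The spanning tree polynomial `τ(Q) = ∑_T ∏_{{i,j}∈T} Q_{ij}`, summed over all
spanning trees of the complete graph on `{1, …, d}`. -/
noncomputable def tau {d : ℕ} (Q : Matrix (Fin d) (Fin d) ℝ) : ℝ :=
  ∑ T ∈ (univ : Finset (SimpleGraph (Fin d))).filter (fun T => T.IsTree),
    ∏ p ∈ univ.filter (fun p : Fin d × Fin d => p.1 < p.2 ∧ T.Adj p.1 p.2), Q p.1 p.2

/-- The Cayley–Menger matrix of `Γ`. -/
noncomputable def CM {d : ℕ} (Γ : Matrix (Fin d) (Fin d) ℝ) :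
    Matrix (Fin (d + 1)) (Fin (d + 1)) ℝ :=
  Matrix.of fun a b =>
    if ha : (a : ℕ) < d then
      (if hb : (b : ℕ) < d then -Γ ⟨a, ha⟩ ⟨b, hb⟩ / 2 else 1)
    else (if (b : ℕ) < d then -1 else 0)

/-- Membership in the cone `𝒞^d` of symmetric matrices with zero diagonal that are
strictly conditionally negative definite. -/
def memC {d : ℕ} (Γ : Matrix (Fin d) (Fin d) ℝ) : Prop :=
  Γ.IsSymm ∧ (∀ i, Γ i i = 0) ∧
    ∀ x : Fin d → ℝ, x ≠ 0 → (∑ i, x i) = 0 → x ⬝ᵥ Γ.mulVec x < 0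

/-!
Let `L` be the weighted Laplacian and `A = L + e_r e_rᵀ` its grounding at a vertex `r`. Rooting
every spanning tree at `r` and expanding the determinant along the rows of `L` gives the matrix-tree
theorem `τ = det A`. Changing the weight of the edge `ij` by `t` adds `t u uᵀ` to `A`, where
`u = e_i - e_j`, so by the matrix determinant lemma `τ` is affine in `t`, with relative slope
`uᵀ A⁻¹ u = uᵀ Σ u = Γ_ij`.
-/

section Determinant

variable {V ι R : Type*} [Fintype V] [DecidableEq V] [Fintype ι] [CommRing R]

lemma det_of_sum_smul (c : Matrix V ι R) (b : V → ι → V → R) :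
    (of fun v => ∑ k, c v k • b v k).det =
      ∑ f : V → ι, (∏ v, c v (f v)) * (of fun v => b v (f v)).det := by
  let D := (detRowAlternating (n := V) (R := R)).toMultilinearMap
  calc D (fun v => ∑ k, c v k • b v k)
      = ∑ f : V → ι, D fun v => c v (f v) • b v (f v) := D.map_sum _
    _ = ∑ f : V → ι, (∏ v, c v (f v)) * D fun v => b v (f v) :=
        Finset.sum_congr rfl fun f _ => D.map_smul_univ _ _

lemma det_add_vecMulVec_of_mulVec_eq {A : Matrix V V R} {u z : V → R} (hz : A *ᵥ z = u)
    (w : V → R) : (A + vecMulVec u w).det = A.det * (1 + w ⬝ᵥ z) := by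
  have factor : A + vecMulVec u w = A * (1 + vecMulVec z w) := by
    rw [Matrix.mul_add, Matrix.mul_one, mul_vecMulVec, hz]
  rw [factor, det_mul, vecMulVec_eq Unit, det_one_add_replicateCol_mul_replicateRow]

end Determinant

section ParentMap

variable {V : Type*} {r : V} {f g : V → V}

/-- `f` is the parent map of a tree rooted at `r`: it sends each vertex `v ≠ r` to its neighbour on
the path to `r`. The root is made a fixed point so that `f` is a total function. -/
structure IsParentMap (r : V) (f : V → V) : Prop where
  map_root : f r = r
  exists_iterate_eq_root : ∀ v, ∃ k, f^[k] v = r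

/-- The simple graph with an edge between `v` and `f v` whenever these differ. For a parent map it
is the underlying unrooted tree. -/
def functionalGraph (f : V → V) : SimpleGraph V :=
  SimpleGraph.fromRel fun v w => f v = w

namespace IsParentMap

lemma exists_depth (hf : IsParentMap r f) : ∃ depth : V → ℕ, ∀ v ≠ r, depth (f v) < depth v := by
  classical
  refine ⟨fun v => Nat.find (hf.exists_iterate_eq_root v), fun v hv => ?_⟩
  obtain ⟨k, hk⟩ : ∃ k, Nat.find (hf.exists_iterate_eq_root v) = k + 1 :=
    Nat.exists_eq_succ_of_ne_zero fun h0 => hv ((Nat.find_eq_zero _).1 h0)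
  have reach : f^[k + 1] v = r := hk ▸ Nat.find_spec (hf.exists_iterate_eq_root v)
  simp only [hk, Nat.lt_succ_iff]
  exact Nat.find_min' _ reach

lemma of_depth (hr : f r = r) {depth : V → ℕ} (hdepth : ∀ v ≠ r, depth (f v) < depth v) :
    IsParentMap r f := by
  refine ⟨hr, fun v => ?_⟩
  induction v using WellFounded.induction (measure depth).wf with
  | _ v ih =>
    by_cases hv : v = r
    · exact ⟨0, hv⟩
    · obtain ⟨k, hk⟩ := ih (f v) (hdepth v hv)
      exact ⟨k + 1, hk⟩

@[elab_as_elim]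
lemma induction (hf : IsParentMap r f) {P : V → Prop} (root : P r)
    (step : ∀ v ≠ r, P (f v) → P v) (v : V) : P v := by
  obtain ⟨depth, hdepth⟩ := hf.exists_depth
  induction v using WellFounded.induction (measure depth).wf with
  | _ v ih =>
    by_cases hv : v = r
    · exact hv ▸ root
    · exact step v hv (ih (f v) (hdepth v hv))

lemma map_ne (hf : IsParentMap r f) {v : V} (hv : v ≠ r) : f v ≠ v := by
  obtain ⟨depth, hdepth⟩ := hf.exists_depth
  exact fun h => (hdepth v hv).ne (congrArg depth h)

lemma map_map_ne (hf : IsParentMap r f) {v : V} (hv : v ≠ r) : f (f v) ≠ v := by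
  intro h
  have hfv : f v ≠ r := fun hr => hv (by rw [← h, hr, hf.map_root])
  obtain ⟨depth, hdepth⟩ := hf.exists_depth
  exact (hdepth v hv).asymm (by simpa only [h] using hdepth (f v) hfv)

lemma adj_map (hf : IsParentMap r f) {v : V} (hv : v ≠ r) : (functionalGraph f).Adj v (f v) :=
  ⟨(hf.map_ne hv).symm, Or.inl rfl⟩

lemma ne_root_of_map_eq (hf : IsParentMap r f) {v w : V} (hvw : v ≠ w) (h : f v = w) : v ≠ r := by
  rintro rfl
  exact hvw (hf.map_root.symm.trans h)

lemma injOn_edge (hf : IsParentMap r f) : Set.InjOn (fun v => s(v, f v)) {r}ᶜ := by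
  intro v hv w _ hvw
  rcases Sym2.eq_iff.1 hvw with ⟨h, _⟩ | ⟨hv_eq, hw_eq⟩
  · exact h
  · exact absurd (by rw [hw_eq, ← hv_eq]) (hf.map_map_ne hv)

lemma edgeSet_functionalGraph (hf : IsParentMap r f) :
    (functionalGraph f).edgeSet = (fun v => s(v, f v)) '' {r}ᶜ := by
  apply Set.Subset.antisymm
  · rintro ⟨a, b⟩ ⟨hab, h | h⟩
    · exact ⟨a, hf.ne_root_of_map_eq hab h, by simp only [h]⟩
    · exact ⟨b, hf.ne_root_of_map_eq hab.symm h, by simp only [h]; exact Sym2.eq_swap⟩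
  · rintro _ ⟨v, hv, rfl⟩
    exact hf.adj_map hv

lemma connected_functionalGraph (hf : IsParentMap r f) : (functionalGraph f).Connected := by
  have reachable_root (v : V) : (functionalGraph f).Reachable v r := by
    induction v using hf.induction with
    | root => exact .refl r
    | step v hv ih => exact (hf.adj_map hv).reachable.trans ih
  have : Nonempty V := ⟨r⟩
  exact ⟨fun v w => (reachable_root v).trans (reachable_root w).symm⟩

lemma isTree_functionalGraph [Finite V] (hf : IsParentMap r f) : (functionalGraph f).IsTree := by
  refine SimpleGraph.isTree_iff_connected_and_card.2 ⟨hf.connected_functionalGraph, ?_⟩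
  rw [hf.edgeSet_functionalGraph, Nat.card_image_of_injOn hf.injOn_edge, Nat.card_coe_set_eq,
    ← Set.ncard_singleton r, add_comm, Set.ncard_add_ncard_compl]

lemma functionalGraph_inj (hf : IsParentMap r f) (hg : IsParentMap r g)
    (h : functionalGraph f = functionalGraph g) : f = g := by
  funext v
  induction v using hf.induction with
  | root => rw [hf.map_root, hg.map_root]
  | step v hv ih =>
    obtain ⟨_, hgv | hgv⟩ : (functionalGraph g).Adj v (f v) := h ▸ hf.adj_map hv
    · exact hgv.symm
    · exact absurd (ih.trans hgv) (hf.map_map_ne hv)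

lemma prod_edgeFinset {M : Type*} [CommMonoid M] [Fintype V] [DecidableEq V]
    [Fintype (functionalGraph f).edgeSet] (hf : IsParentMap r f) (w : Sym2 V → M) :
    ∏ e ∈ (functionalGraph f).edgeFinset, w e = ∏ v ∈ univ.erase r, w s(v, f v) := by
  have image_eq : (functionalGraph f).edgeFinset = (univ.erase r).image fun v => s(v, f v) := by
    ext e
    simp only [SimpleGraph.mem_edgeFinset, hf.edgeSet_functionalGraph, Set.mem_image,
      Set.mem_compl_singleton_iff, mem_image, mem_erase, mem_univ, and_true]
  rw [image_eq, prod_image (hf.injOn_edge.mono fun v hv => ne_of_mem_erase hv)]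

end IsParentMap

lemma exists_adj_dist_lt {T : SimpleGraph V} (hT : T.Connected) {v : V} (hv : v ≠ r) :
    ∃ w, T.Adj v w ∧ T.dist w r < T.dist v r := by
  obtain ⟨p, hp⟩ := hT.exists_walk_length_eq_dist v r
  cases p with
  | nil => exact absurd rfl hv
  | cons hadj q =>
    refine ⟨_, hadj, ?_⟩
    rw [← hp, SimpleGraph.Walk.length_cons]
    exact Nat.lt_succ_of_le (SimpleGraph.dist_le q)

lemma exists_isParentMap_functionalGraph_eq (r : V) {T : SimpleGraph V} (hT : T.IsTree) :
    ∃ f, IsParentMap r f ∧ functionalGraph f = T := by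
  classical
  choose! parent hparent using fun v (hv : v ≠ r) => exists_adj_dist_lt hT.connected hv
  let f : V → V := Function.update parent r r
  have f_of_ne {v : V} (hv : v ≠ r) : f v = parent v := Function.update_of_ne hv _ _
  have hf : IsParentMap r f := .of_depth (Function.update_self ..) (depth := (T.dist · r))
    fun v hv => f_of_ne hv ▸ (hparent v hv).2
  have hle : functionalGraph f ≤ T := by
    rw [← SimpleGraph.edgeSet_subset_edgeSet, hf.edgeSet_functionalGraph]
    rintro _ ⟨v, hv, rfl⟩
    have hadj : T.Adj v (f v) := by simpa only [f_of_ne hv] using (hparent v hv).1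
    exact hadj
  exact ⟨f, hf, hle.antisymm
    ((SimpleGraph.isTree_iff_minimal_connected.1 hT).2 hf.connected_functionalGraph hle)⟩

open Classical in
lemma sum_isTree_prod_edgeFinset_eq_sum_isParentMap {R : Type*} [CommSemiring R] [Fintype V]
    [DecidableEq V] (r : V) (w : Sym2 V → R) :
    ∑ T : SimpleGraph V with T.IsTree, ∏ e ∈ T.edgeFinset, w e =
      ∑ f : V → V with IsParentMap r f, ∏ v ∈ univ.erase r, w s(v, f v) := by
  symm
  refine sum_bij (fun f _ => functionalGraph f) (fun f hf => ?_) (fun f hf g hg => ?_)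
    (fun T hT => ?_) (fun f hf => ?_)
  · exact mem_filter_univ _ |>.2 (mem_filter_univ _ |>.1 hf).isTree_functionalGraph
  · exact (mem_filter_univ _ |>.1 hf).functionalGraph_inj (mem_filter_univ _ |>.1 hg)
  · obtain ⟨f, hf, hfT⟩ := exists_isParentMap_functionalGraph_eq r (mem_filter_univ _ |>.1 hT)
    exact ⟨f, mem_filter_univ _ |>.2 hf, hfT⟩
  · exact ((mem_filter_univ _ |>.1 hf).prod_edgeFinset w).symm

end ParentMap

section RootedIncidence

variable {V R : Type*} [DecidableEq V] [CommRing R] {r : V} {f : V → V}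

/-- The incidence matrix of the edges `v → f v`, with row `v` equal to `e_v - e_{f v}` for `v ≠ r`
and to `e_r` for `v = r`. -/
def rootedIncidence (R : Type*) [CommRing R] (r : V) (f : V → V) : Matrix V V R :=
  of fun v => Pi.single v 1 - if v = r then 0 else Pi.single (f v) 1

variable [Fintype V]

lemma rootedIncidence_mulVec_apply (x : V → R) (v : V) :
    (rootedIncidence R r f *ᵥ x) v = x v - if v = r then 0 else x (f v) := by
  calc (rootedIncidence R r f *ᵥ x) v
      = (Pi.single v 1 - if v = r then 0 else Pi.single (f v) 1) ⬝ᵥ x := rfl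
    _ = x v - if v = r then 0 else x (f v) := by split_ifs <;> simp [sub_dotProduct]

lemma IsParentMap.det_rootedIncidence (hf : IsParentMap r f) :
    (rootedIncidence R r f).det = 1 := by
  obtain ⟨depth, hdepth⟩ := hf.exists_depth
  have off_diag {v w : V} (hvw : v ≠ w) (hle : depth v ≤ depth w) :
      rootedIncidence R r f v w = 0 := by
    by_cases hv : v = r
    · simp [rootedIncidence, hv, hv ▸ hvw.symm]
    · have hw : w ≠ f v := by rintro rfl; exact (hdepth v hv).not_ge hle
      simp [rootedIncidence, hv, hvw.symm, hw]
  have diag (v : V) : rootedIncidence R r f v v = 1 := by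
    by_cases hv : v = r
    · simp [rootedIncidence, hv]
    · simp [rootedIncidence, hv, (hf.map_ne hv).symm]
  have triangular : (rootedIncidence R r f).BlockTriangular (OrderDual.toDual ∘ depth) :=
    fun v w hlt => off_diag (fun h => hlt.ne (by rw [h])) (OrderDual.toDual_lt_toDual.1 hlt).le
  rw [triangular.det]
  refine prod_eq_one fun k _ => ?_
  suffices (rootedIncidence R r f).toSquareBlock (OrderDual.toDual ∘ depth) k = 1 by
    rw [this, det_one]
  ext v w
  obtain rfl | hvw := eq_or_ne v w
  · rw [toSquareBlock_def, of_apply, diag, one_apply_eq]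
  · rw [toSquareBlock_def, of_apply, one_apply_ne hvw]
    exact off_diag (Subtype.coe_injective.ne hvw)
      (OrderDual.toDual_inj.1 (v.2.trans w.2.symm)).le

lemma det_rootedIncidence_of_not_isParentMap (hr : f r = r) (hf : ¬IsParentMap r f) :
    (rootedIncidence R r f).det = 0 := by
  classical
  obtain ⟨v, hv⟩ : ∃ v, ¬∃ k, f^[k] v = r := not_forall.1 fun h => hf ⟨hr, h⟩
  have reach_map {u : V} (hu : u ≠ r) : (∃ k, f^[k] (f u) = r) ↔ ∃ k, f^[k] u = r := by
    refine ⟨fun ⟨k, hk⟩ => ⟨k + 1, hk⟩, ?_⟩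
    rintro ⟨_ | k, hk⟩
    · exact absurd hk hu
    · exact ⟨k, hk⟩
  -- The indicator of the vertices that never reach the root is constant along the edges `u → f u`.
  let z : V → R := fun u => if ∃ k, f^[k] u = r then 0 else 1
  have hz : rootedIncidence R r f *ᵥ z = 0 := by
    funext u
    rw [rootedIncidence_mulVec_apply, Pi.zero_apply]
    by_cases hu : u = r
    · have reach : ∃ k, f^[k] u = r := ⟨0, hu⟩
      simp only [z, if_pos reach, if_pos hu, sub_zero]
    · simp only [z, if_neg hu, reach_map hu, sub_self]
  refine det_eq_zero_of_mulVec_eq_zero_of_mem_nonZeroDivisors hz (i := v) ?_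
  simp only [z, if_neg hv, one_mem]

end RootedIncidence

section Laplacian

variable {V R : Type*} [Fintype V] [DecidableEq V] [CommRing R]

/-- The Laplacian of the weighted digraph with weights `Q`, i.e. the matrix `Θ(Q)`. Diagonal entries
of `Q` cancel. -/
def weightedLaplacian (Q : Matrix V V R) : Matrix V V R :=
  diagonal (fun v => ∑ w, Q v w) - Q

/-- The Laplacian grounded at `r`, which removes the constant vectors from its kernel. Here this is
done by adding `1` to the entry at `(r, r)` instead of deleting row and column `r`. -/
def groundedLaplacian (Q : Matrix V V R) (r : V) : Matrix V V R :=
  weightedLaplacian Q + vecMulVec (Pi.single r 1) (Pi.single r 1)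

lemma weightedLaplacian_mulVec_apply (Q : Matrix V V R) (x : V → R) (v : V) :
    (weightedLaplacian Q *ᵥ x) v = ∑ w, Q v w * (x v - x w) := by
  simp only [weightedLaplacian, sub_mulVec, Pi.sub_apply, mulVec_diagonal, mul_sub,
    sum_sub_distrib, sum_mul]
  rfl

lemma weightedLaplacian_mulVec_const (Q : Matrix V V R) (c : R) :
    weightedLaplacian Q *ᵥ Function.const V c = 0 := by
  funext v
  simp only [weightedLaplacian_mulVec_apply, Function.const_apply, sub_self, mul_zero,
    sum_const_zero, Pi.zero_apply]

lemma isSymm_weightedLaplacian {Q : Matrix V V R} (hQ : Q.IsSymm) :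
    (weightedLaplacian Q).IsSymm :=
  (isSymm_diagonal _).sub hQ

lemma weightedLaplacian_add (Q E : Matrix V V R) :
    weightedLaplacian (Q + E) = weightedLaplacian Q + weightedLaplacian E := by
  simp only [weightedLaplacian, Matrix.add_apply, sum_add_distrib, ← diagonal_add]
  abel

lemma weightedLaplacian_single (i j : V) (t : R) :
    weightedLaplacian (Matrix.single i j t) =
      t • vecMulVec (Pi.single i 1) (Pi.single i 1 - Pi.single j 1) := by
  ext v w
  have row_sum : ∑ u, Matrix.single i j t v u = if i = v then t else 0 := by
    simp [Matrix.single_apply, ite_and]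
  simp only [weightedLaplacian, Matrix.sub_apply, diagonal_apply, row_sum]
  simp only [Matrix.single_apply, Matrix.smul_apply, vecMulVec_apply, Pi.sub_apply,
    Pi.single_apply, smul_eq_mul]
  grind

lemma groundedLaplacian_add_edge (Q : Matrix V V R) (r i j : V) (t : R) :
    groundedLaplacian (Q + (Matrix.single i j t + Matrix.single j i t)) r =
      groundedLaplacian Q r +
        vecMulVec (Pi.single i 1 - Pi.single j 1) (t • (Pi.single i 1 - Pi.single j 1)) := by
  simp only [groundedLaplacian, weightedLaplacian_add, weightedLaplacian_single, vecMulVec_smul,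
    sub_vecMulVec, vecMulVec_sub, smul_sub]
  abel

lemma det_weightedLaplacian_eq_zero [Nonempty V] (Q : Matrix V V R) :
    (weightedLaplacian Q).det = 0 :=
  det_eq_zero_of_mulVec_eq_zero_of_mem_nonZeroDivisors (weightedLaplacian_mulVec_const Q 1)
    (i := Classical.arbitrary V) (one_mem _)

lemma det_groundedLaplacian_eq_det_updateRow (Q : Matrix V V R) (r : V) :
    (groundedLaplacian Q r).det = ((weightedLaplacian Q).updateRow r (Pi.single r 1)).det := by
  have : Nonempty V := ⟨r⟩
  have rows : groundedLaplacian Q r =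
      (weightedLaplacian Q).updateRow r (weightedLaplacian Q r + Pi.single r 1) := by
    ext v w
    obtain rfl | hv := eq_or_ne v r
    · simp [groundedLaplacian, vecMulVec_apply]
    · simp [groundedLaplacian, vecMulVec_apply, hv]
  rw [rows, det_updateRow_add, updateRow_eq_self, det_weightedLaplacian_eq_zero, zero_add]

lemma updateRow_weightedLaplacian_eq_sum_smul (Q : Matrix V V R) (r : V) :
    (weightedLaplacian Q).updateRow r (Pi.single r 1) =
      of fun v => ∑ u, Q.updateRow r (Pi.single r 1) v u •
        (Pi.single v 1 - if v = r then 0 else Pi.single u 1) := by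
  ext v w
  obtain rfl | hv := eq_or_ne v r
  · simp [Pi.single_apply v, ite_apply]
  · simp [hv, weightedLaplacian, diagonal_apply, Pi.single_apply, mul_sub, sum_sub_distrib,
      eq_comm (a := v) (b := w)]

open Classical in
theorem det_groundedLaplacian_eq_sum_isParentMap (Q : Matrix V V R) (r : V) :
    (groundedLaplacian Q r).det =
      ∑ f : V → V with IsParentMap r f, ∏ v ∈ univ.erase r, Q v (f v) := by
  rw [det_groundedLaplacian_eq_det_updateRow, updateRow_weightedLaplacian_eq_sum_smul,
    det_of_sum_smul, sum_filter]
  refine sum_congr rfl fun f _ => ?_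
  change _ * (rootedIncidence R r f).det = _
  have prod_eq : ∏ v, Q.updateRow r (Pi.single r 1) v (f v) =
      (if f r = r then 1 else 0) * ∏ v ∈ univ.erase r, Q v (f v) := by
    rw [← mul_prod_erase univ _ (mem_univ r), updateRow_self, Pi.single_apply]
    congr 1
    exact prod_congr rfl fun v hv => by rw [updateRow_ne (ne_of_mem_erase hv)]
  rw [prod_eq]
  by_cases hf : IsParentMap r f
  · rw [if_pos hf, if_pos hf.map_root, hf.det_rootedIncidence, one_mul, mul_one]
  · rw [if_neg hf]
    by_cases hr : f r = r
    · rw [det_rootedIncidence_of_not_isParentMap hr hf, mul_zero]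
    · rw [if_neg hr, zero_mul, zero_mul]

open Classical in
theorem sum_isTree_prod_edgeFinset_eq_det_groundedLaplacian (w : Sym2 V → R) (r : V) :
    ∑ T : SimpleGraph V with T.IsTree, ∏ e ∈ T.edgeFinset, w e =
      (groundedLaplacian (of fun a b => w s(a, b)) r).det := by
  rw [sum_isTree_prod_edgeFinset_eq_sum_isParentMap r, det_groundedLaplacian_eq_sum_isParentMap]
  rfl

lemma groundedLaplacian_mulVec_sub_const {Q : Matrix V V R} {y b : V → R}
    (h : weightedLaplacian Q *ᵥ y = b) (r : V) :
    groundedLaplacian Q r *ᵥ (y - Function.const V (y r)) = b := by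
  have vanishes_at_root : Pi.single r 1 ⬝ᵥ (y - Function.const V (y r)) = 0 := by
    simp only [single_dotProduct, Pi.sub_apply, Function.const_apply, sub_self, mul_zero]
  rw [groundedLaplacian, add_mulVec, vecMulVec_mulVec, vanishes_at_root, MulOpposite.op_zero,
    zero_smul, add_zero, mulVec_sub, weightedLaplacian_mulVec_const, h, sub_zero]

lemma dotProduct_groundedLaplacian_mulVec (Q : Matrix V V R) (r : V) (x : V → R) :
    x ⬝ᵥ groundedLaplacian Q r *ᵥ x = x ⬝ᵥ weightedLaplacian Q *ᵥ x + x r ^ 2 := by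
  simp [groundedLaplacian, add_mulVec, vecMulVec_mulVec, sq]

lemma dotProduct_weightedLaplacian_mulVec_sub_const {Q : Matrix V V R} (hQ : Q.IsSymm)
    (x : V → R) (c : R) :
    (x - Function.const V c) ⬝ᵥ weightedLaplacian Q *ᵥ (x - Function.const V c) =
      x ⬝ᵥ weightedLaplacian Q *ᵥ x := by
  have const_dotProduct : Function.const V c ⬝ᵥ weightedLaplacian Q *ᵥ x = 0 := by
    rw [dotProduct_mulVec, ← mulVec_transpose, isSymm_weightedLaplacian hQ,
      weightedLaplacian_mulVec_const, zero_dotProduct]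
  rw [mulVec_sub, weightedLaplacian_mulVec_const, sub_zero, sub_dotProduct, const_dotProduct,
    sub_zero]

lemma posDef_groundedLaplacian {Q : Matrix V V ℝ} (hQ : Q.IsSymm)
    (hpos : ∀ x : V → ℝ, x ≠ 0 → ∑ v, x v = 0 → 0 < x ⬝ᵥ weightedLaplacian Q *ᵥ x) (r : V) :
    (groundedLaplacian Q r).PosDef := by
  have isSymm : (groundedLaplacian Q r).IsSymm :=
    (isSymm_weightedLaplacian hQ).add (transpose_vecMulVec _ _)
  refine .of_dotProduct_mulVec_pos isSymm fun x hx => ?_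
  rw [star_trivial, dotProduct_groundedLaplacian_mulVec]
  have : Nonempty V := ⟨r⟩
  let mean := (∑ v, x v) / Fintype.card V
  let y := x - Function.const V mean
  have sum_y : ∑ v, y v = 0 := by
    simp [y, mean, mul_div_cancel₀]
  rw [← dotProduct_weightedLaplacian_mulVec_sub_const hQ x mean]
  by_cases hy : y = 0
  · have x_eq : x = Function.const V mean := sub_eq_zero.1 hy
    have mean_ne_zero : mean ≠ 0 := fun h => hx (by rw [x_eq, h]; rfl)
    have root_ne_zero : x r ≠ 0 := by rwa [x_eq]
    change 0 < y ⬝ᵥ weightedLaplacian Q *ᵥ y + x r ^ 2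
    rw [hy, zero_dotProduct, zero_add]
    positivity
  · exact add_pos_of_pos_of_nonneg (hpos y hy sum_y) (sq_nonneg _)

end Laplacian

section SpanningTreePolynomial

lemma prod_edgeFinset_eq_prod_lt {V M : Type*} [Fintype V] [LinearOrder V] [CommMonoid M]
    (G : SimpleGraph V) [DecidableRel G.Adj] (w : Sym2 V → M) :
    ∏ e ∈ G.edgeFinset, w e = ∏ p : V × V with p.1 < p.2 ∧ G.Adj p.1 p.2, w s(p.1, p.2) := by
  symm
  refine prod_nbij (fun p => s(p.1, p.2)) ?_ ?_ ?_ fun _ _ => rfl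
  · rintro ⟨a, b⟩ hab
    exact SimpleGraph.mem_edgeFinset.2 (mem_filter_univ _ |>.1 hab).2
  · rintro ⟨a, b⟩ hab ⟨a', b'⟩ hab' h
    have hlt := (mem_filter_univ _ |>.1 hab).1
    have hlt' := (mem_filter_univ _ |>.1 hab').1
    rcases Sym2.eq_iff.1 h with ⟨rfl, rfl⟩ | ⟨rfl, rfl⟩
    · rfl
    · exact absurd hlt' hlt.asymm
  · rintro ⟨a, b⟩ hab
    have hadj : G.Adj a b := SimpleGraph.mem_edgeFinset.1 hab
    rcases hadj.ne.lt_or_gt with hlt | hlt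
    · exact ⟨(a, b), mem_filter_univ _ |>.2 ⟨hlt, hadj⟩, rfl⟩
    · exact ⟨(b, a), mem_filter_univ _ |>.2 ⟨hlt, hadj.symm⟩, Sym2.eq_swap⟩

variable {d : ℕ} {Q S : Matrix (Fin d) (Fin d) ℝ}

lemma thetaOf_eq_weightedLaplacian (Q : Matrix (Fin d) (Fin d) ℝ) :
    thetaOf Q = weightedLaplacian Q := by
  ext i j
  obtain rfl | hij := eq_or_ne i j
  · simp [thetaOf, weightedLaplacian, filter_ne', sum_erase_eq_sub]
  · simp [thetaOf, weightedLaplacian, hij]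

theorem tau_eq_det_groundedLaplacian (hQ : Q.IsSymm) (r : Fin d) :
    tau Q = (groundedLaplacian Q r).det := by
  classical
  let w : Sym2 (Fin d) → ℝ := Sym2.lift ⟨Q, fun a b => hQ.apply b a⟩
  calc tau Q = ∑ T : SimpleGraph (Fin d) with T.IsTree, ∏ e ∈ T.edgeFinset, w e := by
        unfold tau
        refine sum_congr (by congr) fun T _ => ?_
        rw [prod_edgeFinset_eq_prod_lt]
        congr
    _ = (groundedLaplacian Q r).det := by
        convert sum_isTree_prod_edgeFinset_eq_det_groundedLaplacian w r
        rfl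

lemma memQ.tau_pos (hQ : memQ Q) (r : Fin d) : 0 < tau Q := by
  rw [tau_eq_det_groundedLaplacian hQ.1 r]
  exact (posDef_groundedLaplacian hQ.1 (thetaOf_eq_weightedLaplacian Q ▸ hQ.2.2) r).det_pos

lemma isSigmaOf.thetaOf_mulVec_mulVec (hS : isSigmaOf Q S) {u : Fin d → ℝ} (hu : ∑ i, u i = 0) :
    thetaOf Q *ᵥ (S *ᵥ u) = u := by
  have ones_mulVec : (of fun _ _ : Fin d => (1 : ℝ)) *ᵥ u = 0 := by
    funext i
    simpa [mulVec, dotProduct] using hu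
  rw [mulVec_mulVec, hS.2.2, Pmat, sub_mulVec, one_mulVec, smul_mulVec, ones_mulVec, smul_zero,
    sub_zero]

lemma gammaOf_eq_dotProduct_mulVec (hS : S.IsSymm) (i j : Fin d) :
    gammaOf S i j =
      (Pi.single i 1 - Pi.single j 1) ⬝ᵥ S *ᵥ (Pi.single i 1 - Pi.single j 1) := by
  simp only [gammaOf, of_apply, mulVec_sub, sub_dotProduct, dotProduct_sub, single_one_dotProduct,
    mulVec_single_one, col_apply, hS.apply i j]
  ring

theorem tau_add_edge (hQ : Q.IsSymm) (hS : isSigmaOf Q S) (i j : Fin d) (t : ℝ) :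
    tau (Q + (Matrix.single i j t + Matrix.single j i t)) = tau Q * (1 + t * gammaOf S i j) := by
  let u : Fin d → ℝ := Pi.single i 1 - Pi.single j 1
  have sum_u : ∑ k, u k = 0 := by simp [u]
  have poisson : groundedLaplacian Q i *ᵥ (S *ᵥ u - Function.const _ ((S *ᵥ u) i)) = u :=
    groundedLaplacian_mulVec_sub_const
      (thetaOf_eq_weightedLaplacian Q ▸ hS.thetaOf_mulVec_mulVec sum_u) i
  have u_dotProduct_const (c : ℝ) : u ⬝ᵥ Function.const _ c = 0 := by
    simp [u, sub_dotProduct]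
  have isSymm : (Q + (Matrix.single i j t + Matrix.single j i t)).IsSymm := by
    simp [IsSymm, hQ.eq, add_comm]
  rw [tau_eq_det_groundedLaplacian isSymm i, tau_eq_det_groundedLaplacian hQ i,
    groundedLaplacian_add_edge, det_add_vecMulVec_of_mulVec_eq poisson, smul_dotProduct,
    dotProduct_sub, u_dotProduct_const, sub_zero, ← gammaOf_eq_dotProduct_mulVec hS.1, smul_eq_mul]

lemma of_add_ite_eq_add_single {V R : Type*} [DecidableEq V] [AddMonoid R] (Q : Matrix V V R)
    {i j : V} (hij : i ≠ j) (t : R) :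
    (of fun a b => Q a b + if (a = i ∧ b = j) ∨ (a = j ∧ b = i) then t else 0) =
      Q + (Matrix.single i j t + Matrix.single j i t) := by
  ext a b
  simp only [of_apply, Matrix.add_apply, Matrix.single_apply]
  grind

end SpanningTreePolynomial

theorem hasDerivAt_log_tau_general {d : ℕ} (Q S : Matrix (Fin d) (Fin d) ℝ)
    (hQ : Q.IsSymm) (hτ : 0 < tau Q) (hS : isSigmaOf Q S) (i j : Fin d) (hij : i ≠ j) :
    HasDerivAt
      (fun t : ℝ => Real.log (tau (Matrix.of fun a b =>
        Q a b + (if (a = i ∧ b = j) ∨ (a = j ∧ b = i) then t else 0))))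
      (gammaOf S i j) 0 := by
  simp only [of_add_ite_eq_add_single Q hij, tau_add_edge hQ hS]
  have affine : HasDerivAt (fun t => tau Q * (1 + t * gammaOf S i j)) (tau Q * gammaOf S i j) 0 :=
    ((hasDerivAt_mul_const (gammaOf S i j)).const_add 1).const_mul (tau Q)
  simpa [hτ.ne'] using affine.log (by simpa using hτ.ne')

/-- The partial derivative of `log τ` with respect to the weight `Q_{ij}` equals the
variogram entry `Γ(Q)_{ij}`. -/
theorem hasDerivAt_log_tau {d : ℕ} (Q S : Matrix (Fin d) (Fin d) ℝ)
    (hQ : memQ Q) (hS : isSigmaOf Q S) (i j : Fin d) (hij : i < j) :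
    HasDerivAt
      (fun t : ℝ => Real.log (tau (Matrix.of fun a b =>
        Q a b + (if (a = i ∧ b = j) ∨ (a = j ∧ b = i) then t else 0))))
      (gammaOf S i j) 0 := by
  exact hasDerivAt_log_tau_general Q S hQ.1 (hQ.tau_pos i) hS i j hij.ne
end
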